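/- The feasible region P_k for consecutive patterns equals the cycle polytope of the overlap graph Ov(k); in particular P_k is a polytope of dimension k! − (k−1)! whose vertices are indexed by the simple cycles of Ov(k). -/

import Mathlib

open Filter Finset

/-- The value of the permutation `σ` at a natural-number index (junk value `0` out of range). -/
def papp {n : ℕ} (σ : Equiv.Perm (Fin n)) (j : ℕ) : ℕ :=
  if h : j < n then (σ ⟨j, h⟩ : ℕ) else 0

/-- The number of consecutive occurrences of the pattern `π` in `σ`:
the number of intervals `i, i+1, …, i+k-1` of indices such that `σ` restricted to them
is in the same relative order as `π`. -/
def cocc {k n : ℕ} (π : Equiv.Perm (Fin k)) (σ : Equiv.Perm (Fin n)) : ℕ :=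
  ((Finset.range (n + 1 - k)).filter
    (fun i => ∀ a b : Fin k, π a < π b ↔ papp σ (i + (a : ℕ)) < papp σ (i + (b : ℕ)))).card

/-- The direct sum `τ ⊕ σ` of two permutations: `τ(1)…τ(m)(σ(1)+m)…(σ(n)+m)`. -/
def dsum {m n : ℕ} (τ : Equiv.Perm (Fin m)) (σ : Equiv.Perm (Fin n)) :
    Equiv.Perm (Fin (m + n)) :=
  finSumFinEquiv.permCongr (Equiv.sumCongr τ σ)

/-- The feasible region `P_k` for consecutive patterns: the set of vectors
`v ∈ ℝ^{S_k}` for which there is a sequence of permutations whose sizes tend to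
infinity and whose normalized consecutive-occurrence vectors tend to `v`. -/
def feasibleRegion (k : ℕ) : Set (Equiv.Perm (Fin k) → ℝ) :=
  { v | ∃ (N : ℕ → ℕ) (σ : ∀ m, Equiv.Perm (Fin (N m))),
      Filter.Tendsto N Filter.atTop Filter.atTop ∧
      ∀ π : Equiv.Perm (Fin k),
        Filter.Tendsto (fun m => (cocc π (σ m) : ℝ) / (N m : ℝ)) Filter.atTop (nhds (v π)) }

/-- The pattern of a tuple of distinct values: the unique permutation in the same
relative order. -/
def patOf {j : ℕ} (f : Fin j → ℕ) : Equiv.Perm (Fin j) := (Tuple.sort f)⁻¹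

/-- The pattern induced by the first `k` entries of a permutation of size `k+1`.
In the overlap graph `Ov(k+1)` this is the source of the edge labeled `π`. -/
def firstPat {k : ℕ} (π : Equiv.Perm (Fin (k + 1))) : Equiv.Perm (Fin k) :=
  patOf (fun i => (π i.castSucc : ℕ))

/-- The pattern induced by the last `k` entries of a permutation of size `k+1`.
In the overlap graph `Ov(k+1)` this is the target of the edge labeled `π`. -/
def lastPat {k : ℕ} (π : Equiv.Perm (Fin (k + 1))) : Equiv.Perm (Fin k) :=
  patOf (fun i => (π i.succ : ℕ))

variable {V E : Type*}

/-- A (non-empty) closed directed walk in the directed multigraph with edge-source map `src`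
and edge-target map `tgt`: a nonempty list of edges in which the target of each edge is the
source of the next, and the target of the last edge is the source of the first. -/
def IsCycleWalk (src tgt : E → V) (c : List E) : Prop :=
  c ≠ [] ∧ c.Chain' (fun a b => tgt a = src b) ∧ c.getLast?.map tgt = c.head?.map src

/-- A simple cycle: a closed directed walk that does not repeat vertices. -/
def IsSimpleCycle (src tgt : E → V) (c : List E) : Prop :=
  IsCycleWalk src tgt c ∧ (c.map src).Nodup

/-- The normalized incidence vector `e_C` of a cycle `C`:
its coordinate at an edge `e` is (number of occurrences of `e` in `C`)/|C|. -/
noncomputable def cycleVec [DecidableEq E] (c : List E) : E → ℝ :=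
  fun e => (c.count e : ℝ) / (c.length : ℝ)

/-- The cycle polytope of a directed multigraph: the convex hull of the normalized incidence
vectors of its simple cycles. -/
noncomputable def cyclePolytope [DecidableEq E] (src tgt : E → V) : Set (E → ℝ) :=
  convexHull ℝ { x | ∃ c, IsSimpleCycle src tgt c ∧ x = cycleVec c }

/-!
A permutation of size `n` traces a walk of length `n - k` in `Ov(k + 1)` through the patterns of its
consecutive windows, and every walk arises in this way: prepending an edge to a walk amounts to
prepending one entry, whose position among the old entries can be chosen freely. Hence the feasible
region consists of the limits of edge frequencies of ever longer walks.

Such limits are circulations of total weight `1`, because the boundary of a walk is bounded. The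
extreme points of the polytope of these circulations are the simple cycles: the support of a
circulation contains a simple cycle, whose vector can be subtracted slightly, and a simple cycle
carries only one circulation. Conversely, `Ov(k + 1)` is strongly connected, so the simple cycles
can be traversed one after another in any proportions at bounded cost, and every circulation is a
limit.
Strong connectivity also yields a circulation with full support and shows that the equations
cutting out its affine hull are independent, which gives the dimension.
-/

section Walks

variable {src tgt : E → V} {u v w : V} {l m : List E}

/-- `IsWalk src tgt u v l`: the list of edges `l` is a directed walk from `u` to `v` in the
multigraph with source map `src` and target map `tgt`. Recording the endpoints makes the empty
walk at each vertex available. -/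
inductive IsWalk (src tgt : E → V) : V → V → List E → Prop
  | nil (v : V) : IsWalk src tgt v v []
  | cons (e : E) {v : V} {l : List E} :
      IsWalk src tgt (tgt e) v l → IsWalk src tgt (src e) v (e :: l)

theorem IsWalk.singleton (src tgt : E → V) (e : E) : IsWalk src tgt (src e) (tgt e) [e] :=
  .cons e (.nil _)

theorem IsWalk.append (hl : IsWalk src tgt u v l) (hm : IsWalk src tgt v w m) :
    IsWalk src tgt u w (l ++ m) := by
  induction hl with
  | nil => exact hm
  | cons e _ ih => exact .cons e (ih hm)

theorem IsWalk.flatten_replicate (hl : IsWalk src tgt u u l) (n : ℕ) :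
    IsWalk src tgt u u (List.replicate n l).flatten := by
  induction n with
  | zero => exact .nil u
  | succ n ih => exact hl.append ih

theorem isWalk_of_isChain {e : E} (h : (e :: l).IsChain fun a b => tgt a = src b) :
    IsWalk src tgt (src e) (tgt ((e :: l).getLast (List.cons_ne_nil e l))) (e :: l) := by
  induction l generalizing e with
  | nil => exact .singleton src tgt e
  | cons f l ih =>
    rw [List.isChain_cons_cons] at h
    exact .cons e (h.1 ▸ ih h.2)

theorem IsCycleWalk.exists_isWalk {c : List E} (hc : IsCycleWalk src tgt c) :
    ∃ v, IsWalk src tgt v v c := by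
  obtain ⟨hne, hchain, hends⟩ := hc
  obtain ⟨e, l, rfl⟩ := List.exists_cons_of_ne_nil hne
  have hclosed : tgt ((e :: l).getLast hne) = src e := by
    simpa [List.getLast?_eq_getLast_of_ne_nil] using hends
  exact ⟨src e, hclosed ▸ isWalk_of_isChain hchain⟩

/-- Strong connectivity of a directed multigraph: every vertex can be reached from every other. -/
def StronglyConnected (src tgt : E → V) : Prop :=
  ∀ u v, ∃ l, IsWalk src tgt u v l

end Walks

section SimpleCycles

variable {src tgt : E → V}

theorem isCycleWalk_ofFn {n : ℕ} {w : Fin (n + 1) → E} :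
    IsCycleWalk src tgt (List.ofFn w) ↔ ∀ i, tgt (w i) = src (w (i + 1)) := by
  have hlast : (List.ofFn w).getLast? = some (w (Fin.last n)) := by
    rw [List.getLast?_eq_getLast_of_ne_nil (by simp), List.getLast_ofFn]
    rfl
  have hhead : (List.ofFn w).head? = some (w 0) := by simp [List.ofFn_succ]
  have hchain : (List.ofFn w).IsChain (fun a b => tgt a = src b) ↔
      ∀ i : Fin n, tgt (w i.castSucc) = src (w (i.castSucc + 1)) := by
    simp only [List.isChain_ofFn, Fin.coeSucc_eq_succ, Fin.forall_iff]
    exact ⟨fun h i hi => h i (by omega), fun h i hi => h i (by omega)⟩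
  rw [Fin.forall_fin_succ', ← hchain, Fin.last_add_one]
  change _ ≠ [] ∧ List.IsChain _ _ ∧ _ ↔ _
  simp only [hlast, hhead, ne_eq, List.ofFn_eq_nil_iff, Nat.add_one_ne_zero, not_false_eq_true,
    Option.map_some, Option.some.injEq, true_and]

theorem isSimpleCycle_ofFn {n : ℕ} {w : Fin (n + 1) → E} :
    IsSimpleCycle src tgt (List.ofFn w) ↔
      (∀ i, tgt (w i) = src (w (i + 1))) ∧ Function.Injective (src ∘ w) := by
  rw [IsSimpleCycle, isCycleWalk_ofFn, List.map_ofFn, List.nodup_ofFn]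

theorem IsSimpleCycle.exists_ofFn {c : List E} (hc : IsSimpleCycle src tgt c) :
    ∃ (n : ℕ) (w : Fin (n + 1) → E), c = List.ofFn w ∧
      (∀ i, tgt (w i) = src (w (i + 1))) ∧ Function.Injective (src ∘ w) := by
  obtain ⟨e, l, rfl⟩ := List.exists_cons_of_ne_nil hc.1.1
  have hofFn : e :: l = List.ofFn (Fin.cons e l.get : Fin (l.length + 1) → E) := by
    rw [List.ofFn_cons, List.ofFn_get]
  exact ⟨_, _, hofFn, isSimpleCycle_ofFn.1 (hofFn ▸ hc)⟩

theorem exists_mem_periodicPts_of_mapsTo {α : Type*} {f : α → α} {s : Set α}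
    (hs : s.Finite) (hne : s.Nonempty) (hf : Set.MapsTo f s s) :
    ∃ a ∈ s, a ∈ Function.periodicPts f := by
  obtain ⟨a, ha⟩ := hne
  obtain ⟨m, n, hmn, heq⟩ := hs.exists_lt_map_eq_of_forall_mem fun i => hf.iterate i ha
  refine ⟨f^[m] a, hf.iterate m ha, n - m, Nat.sub_pos_of_lt hmn, ?_⟩
  rw [Function.IsPeriodicPt, Function.IsFixedPt, ← Function.iterate_add_apply,
    Nat.sub_add_cancel hmn.le, heq]

/- Fixing one outgoing edge at each vertex turns the graph into a self-map of the vertices, whose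
periodic orbits are simple cycles. -/
theorem exists_isSimpleCycle_subset [Finite E] {S : Set E} (hne : S.Nonempty)
    (hS : ∀ e ∈ S, ∃ f ∈ S, tgt e = src f) :
    ∃ c, IsSimpleCycle src tgt c ∧ ∀ e ∈ c, e ∈ S := by
  have hout (v : V) : ∃ f, v ∈ tgt '' S → f ∈ S ∧ src f = v := by
    by_cases hv : v ∈ tgt '' S
    · obtain ⟨e, he, rfl⟩ := hv
      obtain ⟨f, hf, hef⟩ := hS e he
      exact ⟨f, fun _ => ⟨hf, hef.symm⟩⟩
    · exact ⟨hne.some, fun h => absurd h hv⟩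
  choose out hout using hout
  set next : V → V := tgt ∘ out
  have hnext : Set.MapsTo next (tgt '' S) (tgt '' S) := fun v hv => ⟨out v, (hout v hv).1, rfl⟩
  obtain ⟨v, hv, hperiodic⟩ :=
    exists_mem_periodicPts_of_mapsTo (Set.toFinite _) (hne.image tgt) hnext
  have hmem (i : ℕ) : next^[i] v ∈ tgt '' S := hnext.iterate i hv
  obtain ⟨n, hn⟩ :=
    Nat.exists_eq_add_one.2 (Function.minimalPeriod_pos_of_mem_periodicPts hperiodic)
  refine ⟨List.ofFn fun i : Fin (n + 1) => out (next^[i] v),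
    isSimpleCycle_ofFn.2 ⟨fun i => ?_, fun i j hij => ?_⟩, ?_⟩
  · have hi : ((i + 1 : Fin (n + 1)) : ℕ) = (i + 1) % Function.minimalPeriod next v := by
      simp [Fin.val_add, hn]
    rw [(hout _ (hmem _)).2, hi, Function.iterate_mod_minimalPeriod_eq,
      Function.iterate_succ_apply']
    rfl
  · simp only [Function.comp_apply, (hout _ (hmem _)).2] at hij
    exact Fin.ext (Function.iterate_injOn_Iio_minimalPeriod (i.is_lt.trans_eq hn.symm)
      (j.is_lt.trans_eq hn.symm) hij)
  · simp only [List.mem_ofFn, forall_exists_index, forall_apply_eq_imp_iff]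
    exact fun i => (hout _ (hmem i)).1

theorem finite_setOf_isSimpleCycle [Finite E] (src tgt : E → V) :
    {c | IsSimpleCycle src tgt c}.Finite := by
  cases nonempty_fintype E
  refine (List.finite_length_le E (Fintype.card E)).subset fun c hc => ?_
  exact (List.Nodup.of_map src hc.2).length_le_card

end SimpleCycles

section CycleVectors

variable [DecidableEq E]

/-- The incidence vector of a list of edges, counting repetitions. -/
def countVec (l : List E) : E → ℝ :=
  fun e => l.count e

theorem countVec_nil : countVec ([] : List E) = 0 := by
  ext e
  simp [countVec]

theorem countVec_cons (e : E) (l : List E) : countVec (e :: l) = Pi.single e 1 + countVec l := by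
  ext f
  simp only [countVec, List.count_cons, Nat.cast_add, Pi.add_apply, Pi.single_apply, beq_iff_eq,
    eq_comm (a := e), add_comm (l.count f : ℝ), Nat.cast_ite, Nat.cast_one, Nat.cast_zero]

theorem countVec_append (l m : List E) : countVec (l ++ m) = countVec l + countVec m := by
  ext e
  simp only [countVec, List.count_append, Nat.cast_add, Pi.add_apply]

theorem countVec_flatten_replicate (n : ℕ) (l : List E) :
    countVec (List.replicate n l).flatten = (n : ℝ) • countVec l := by
  ext e
  simp [countVec, List.count_flatten]

theorem cycleVec_eq_smul (l : List E) : cycleVec l = (l.length : ℝ)⁻¹ • countVec l := by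
  ext e
  simp only [cycleVec, countVec, Pi.smul_apply, smul_eq_mul, div_eq_inv_mul]

theorem cycleVec_eq_zero_iff {l : List E} {e : E} : cycleVec l e = 0 ↔ e ∉ l := by
  simp only [cycleVec, div_eq_zero_iff, Nat.cast_eq_zero, List.count_eq_zero,
    List.length_eq_zero_iff, or_iff_left_iff_imp]
  rintro rfl
  exact List.not_mem_nil

theorem sum_countVec [Fintype E] (l : List E) : ∑ e, countVec l e = l.length := by
  have hcount : ∑ e, l.count e = l.length := by
    simpa only [Multiset.coe_count, Multiset.coe_card] using
      Multiset.sum_count_eq_card (s := univ) (m := (l : Multiset E)) fun e _ => mem_univ e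
  simp only [countVec, ← Nat.cast_sum, hcount]

theorem cycleVec_mem_stdSimplex [Fintype E] {l : List E} (hl : l ≠ []) :
    cycleVec l ∈ stdSimplex ℝ E := by
  refine ⟨fun e => by unfold cycleVec; positivity, ?_⟩
  have hlength : (l.length : ℝ) ≠ 0 := by simpa using hl
  simp only [cycleVec_eq_smul, Pi.smul_apply, smul_eq_mul, ← mul_sum, sum_countVec,
    inv_mul_cancel₀ hlength]

end CycleVectors

section Circulations

open scoped Topology

variable [Fintype E] [DecidableEq V] {src tgt : E → V} {x d : E → ℝ}

/-- The boundary map of a directed multigraph: it sends an assignment of weights to the edges to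
the net outflow at each vertex. -/
noncomputable def edgeBoundary (src tgt : E → V) : (E → ℝ) →ₗ[ℝ] V → ℝ :=
  Fintype.linearCombination ℝ fun e => Pi.single (src e) 1 - Pi.single (tgt e) 1

theorem edgeBoundary_apply (src tgt : E → V) (x : E → ℝ) (v : V) :
    edgeBoundary src tgt x v = ∑ e with src e = v, x e - ∑ e with tgt e = v, x e := by
  simp [edgeBoundary, Fintype.linearCombination_apply, Pi.single_apply, sum_filter, mul_sub,
    eq_comm (a := v)]

theorem edgeBoundary_single [DecidableEq E] (src tgt : E → V) (e : E) :
    edgeBoundary src tgt (Pi.single e 1) = Pi.single (src e) 1 - Pi.single (tgt e) 1 := by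
  rw [edgeBoundary, Fintype.linearCombination_apply_single, one_smul]

theorem IsWalk.edgeBoundary_countVec [DecidableEq E] {u v : V} {l : List E}
    (hl : IsWalk src tgt u v l) :
    edgeBoundary src tgt (countVec l) = Pi.single u 1 - Pi.single v 1 := by
  induction hl with
  | nil v => rw [countVec_nil, map_zero, sub_self]
  | cons e _ ih => rw [countVec_cons, map_add, edgeBoundary_single, ih, sub_add_sub_cancel]

/-- The polytope of circulations of total weight `1`: nonnegative edge weights of sum `1` for which
the inflow equals the outflow at every vertex. -/
noncomputable def circulationPolytope (src tgt : E → V) : Set (E → ℝ) :=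
  stdSimplex ℝ E ∩ LinearMap.ker (edgeBoundary src tgt)

theorem convex_circulationPolytope (src tgt : E → V) : Convex ℝ (circulationPolytope src tgt) :=
  (convex_stdSimplex ℝ E).inter (Submodule.convex _)

theorem isCompact_circulationPolytope (src tgt : E → V) :
    IsCompact (circulationPolytope src tgt) :=
  (isCompact_stdSimplex ℝ E).inter_right (Submodule.closed_of_finiteDimensional _)

theorem IsWalk.cycleVec_mem_circulationPolytope [DecidableEq E] {v : V} {l : List E}
    (hl : IsWalk src tgt v v l) (hne : l ≠ []) : cycleVec l ∈ circulationPolytope src tgt := by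
  refine ⟨cycleVec_mem_stdSimplex hne, ?_⟩
  rw [SetLike.mem_coe, LinearMap.mem_ker, cycleVec_eq_smul, map_smul, hl.edgeBoundary_countVec,
    sub_self, smul_zero]

theorem IsCycleWalk.cycleVec_mem_circulationPolytope [DecidableEq E] {c : List E}
    (hc : IsCycleWalk src tgt c) : cycleVec c ∈ circulationPolytope src tgt :=
  hc.exists_isWalk.choose_spec.cycleVec_mem_circulationPolytope hc.1

theorem exists_add_smul_mem_circulationPolytope (hx : x ∈ circulationPolytope src tgt)
    (hd : edgeBoundary src tgt d = 0) (hsum : ∑ e, d e = 0) (hpos : ∀ e, x e = 0 → 0 ≤ d e) :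
    ∃ ε : ℝ, 0 < ε ∧ x + ε • d ∈ circulationPolytope src tgt := by
  have hnonneg : ∀ᶠ ε : ℝ in 𝓝[>] 0, ∀ e, 0 ≤ x e + ε * d e := by
    refine eventually_all.2 fun e => ?_
    rcases (hx.1.1 e).eq_or_lt with he | he
    · filter_upwards [self_mem_nhdsWithin] with ε hε
      rw [← he, zero_add]
      exact mul_nonneg (le_of_lt hε) (hpos e he.symm)
    · have hlim : Tendsto (fun ε : ℝ => x e + ε * d e) (𝓝 0) (𝓝 (x e + 0 * d e)) :=
        tendsto_const_nhds.add (tendsto_id.mul_const _)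
      rw [zero_mul, add_zero] at hlim
      exact ((hlim.eventually_const_lt he).filter_mono nhdsWithin_le_nhds).mono fun _ => le_of_lt
  obtain ⟨ε, hε, hεpos⟩ := (hnonneg.and self_mem_nhdsWithin).exists
  refine ⟨ε, hεpos, ⟨hε, ?_⟩, ?_⟩
  · simp only [Pi.add_apply, Pi.smul_apply, sum_add_distrib, ← smul_sum, hsum, smul_zero, add_zero]
    exact hx.1.2
  · rw [SetLike.mem_coe, LinearMap.mem_ker, map_add, map_smul, hd, smul_zero, add_zero]
    exact hx.2

end Circulations

section ExtremePoints

variable [Fintype E] [DecidableEq V] {src tgt : E → V} {x : E → ℝ}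

theorem exists_pos_of_mem_circulationPolytope (hx : x ∈ circulationPolytope src tgt) {e : E}
    (he : 0 < x e) : ∃ f, 0 < x f ∧ tgt e = src f := by
  have hflow : ∑ f with src f = tgt e, x f = ∑ f with tgt f = tgt e, x f := by
    rw [← sub_eq_zero, ← edgeBoundary_apply, LinearMap.mem_ker.1 hx.2, Pi.zero_apply]
  have hin : x e ≤ ∑ f with tgt f = tgt e, x f :=
    single_le_sum (fun f _ => hx.1.1 f) (by simp)
  obtain ⟨f, hf, hpos⟩ := exists_lt_of_sum_lt (f := fun _ => (0 : ℝ)) (g := x)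
    (by simpa only [sum_const_zero] using he.trans_le (hin.trans_eq hflow.symm))
  exact ⟨f, hpos, (mem_filter.1 hf).2.symm⟩

theorem eq_of_edgeBoundary_eq_zero {n : ℕ} {w : Fin (n + 1) → E}
    (hadj : ∀ i, tgt (w i) = src (w (i + 1))) (hinj : Function.Injective (src ∘ w))
    (hx : edgeBoundary src tgt x = 0) (hsupp : ∀ e ∉ Set.range w, x e = 0) (i : Fin (n + 1)) :
    x (w i) = x (w 0) := by
  have hstep (i : Fin (n + 1)) : x (w (i + 1)) = x (w i) := by
    have hflow := edgeBoundary_apply src tgt x (src (w (i + 1)))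
    rw [hx, Pi.zero_apply, eq_comm, sub_eq_zero, sum_eq_single_of_mem (w (i + 1)) (by simp),
      sum_eq_single_of_mem (w i) (by simp [hadj])] at hflow
    · exact hflow
    · refine fun e he hne => hsupp e ?_
      rintro ⟨j, rfl⟩
      rw [mem_filter, hadj] at he
      exact hne (by rw [add_right_cancel (hinj he.2)])
    · refine fun e he hne => hsupp e ?_
      rintro ⟨j, rfl⟩
      exact hne (by rw [hinj (mem_filter.1 he).2])
  induction i using Fin.induction with
  | zero => rfl
  | succ i ih => rw [← ih, ← hstep i.castSucc, Fin.coeSucc_eq_succ]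

theorem IsSimpleCycle.eq_cycleVec [DecidableEq E] {c : List E} (hc : IsSimpleCycle src tgt c)
    (hx : x ∈ circulationPolytope src tgt) (hsupp : ∀ e, e ∉ c → x e = 0) : x = cycleVec c := by
  obtain ⟨n, w, rfl, hadj, hinj⟩ := hc.exists_ofFn
  have hrange : ∀ e ∉ Set.range w, x e = 0 := fun e he => hsupp e (mt List.mem_ofFn.1 he)
  have hconst := eq_of_edgeBoundary_eq_zero hadj hinj (LinearMap.mem_ker.1 hx.2) hrange
  have hsum : (n + 1) * x (w 0) = 1 := by
    have htotal : ∑ i, x (w i) = 1 :=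
      (Fintype.sum_of_injective w hinj.of_comp _ x hrange fun _ => rfl).trans hx.1.2
    simpa only [hconst, sum_const, card_univ, Fintype.card_fin, nsmul_eq_mul, Nat.cast_add,
      Nat.cast_one] using htotal
  ext e
  by_cases he : e ∈ List.ofFn w
  · obtain ⟨i, rfl⟩ := List.mem_ofFn.1 he
    rw [hconst, cycleVec, List.count_eq_one_of_mem (List.nodup_ofFn.2 hinj.of_comp) he,
      List.length_ofFn, eq_div_iff (by positivity), mul_comm]
    exact_mod_cast hsum
  · rw [hsupp e he, cycleVec_eq_zero_iff.2 he]

theorem IsSimpleCycle.cycleVec_mem_extremePoints [DecidableEq E] {c : List E}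
    (hc : IsSimpleCycle src tgt c) :
    cycleVec c ∈ (circulationPolytope src tgt).extremePoints ℝ := by
  refine mem_extremePoints_iff_left.2
    ⟨hc.1.cycleVec_mem_circulationPolytope, fun y hy z hz ⟨a, b, ha, hb, _, hab⟩ => ?_⟩
  refine hc.eq_cycleVec hy fun e he => ?_
  have hsum : a * y e + b * z e = 0 := by
    rw [← cycleVec_eq_zero_iff.2 he, ← hab]
    rfl
  have hay : a * y e = 0 := ((add_eq_zero_iff_of_nonneg (mul_nonneg ha.le (hy.1.1 e))
    (mul_nonneg hb.le (hz.1.1 e))).1 hsum).1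
  exact (mul_eq_zero.1 hay).resolve_left ha.ne'

theorem exists_isSimpleCycle_of_mem_extremePoints [DecidableEq E]
    (hx : x ∈ (circulationPolytope src tgt).extremePoints ℝ) :
    ∃ c, IsSimpleCycle src tgt c ∧ x = cycleVec c := by
  have hne : {e | 0 < x e}.Nonempty := by
    obtain ⟨e, -, he⟩ := exists_lt_of_sum_lt (s := univ) (f := fun _ => (0 : ℝ)) (g := x)
      (by simp [hx.1.1.2])
    exact ⟨e, he⟩
  obtain ⟨c, hc, hsupp⟩ := exists_isSimpleCycle_subset hne fun e he =>
    exists_pos_of_mem_circulationPolytope hx.1 he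
  have hcmem := hc.1.cycleVec_mem_circulationPolytope
  obtain ⟨ε, hε, hmem⟩ := exists_add_smul_mem_circulationPolytope (d := x - cycleVec c) hx.1
    (by rw [map_sub, LinearMap.mem_ker.1 hx.1.2, LinearMap.mem_ker.1 hcmem.2, sub_zero])
    (by simp only [Pi.sub_apply, sum_sub_distrib, hx.1.1.2, hcmem.1.2, sub_self])
    (fun e he => by
      rw [Pi.sub_apply, he, cycleVec_eq_zero_iff.2 fun h => (hsupp e h).ne' he, sub_zero])
  refine ⟨c, hc, (mem_extremePoints_iff_left.1 hx |>.2 _ hcmem _ hmem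
    ⟨ε / (1 + ε), 1 / (1 + ε), by positivity, by positivity, by field_simp; ring, ?_⟩).symm⟩
  ext e
  simp only [Pi.add_apply, Pi.smul_apply, Pi.sub_apply, smul_eq_mul]
  field_simp
  ring

theorem extremePoints_circulationPolytope [DecidableEq E] (src tgt : E → V) :
    (circulationPolytope src tgt).extremePoints ℝ =
      {x | ∃ c, IsSimpleCycle src tgt c ∧ x = cycleVec c} := by
  refine Set.Subset.antisymm (fun x => exists_isSimpleCycle_of_mem_extremePoints) ?_
  rintro _ ⟨c, hc, rfl⟩
  exact hc.cycleVec_mem_extremePoints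

theorem cyclePolytope_eq_circulationPolytope [DecidableEq E] (src tgt : E → V) :
    cyclePolytope src tgt = circulationPolytope src tgt := by
  have hfinite : {x : E → ℝ | ∃ c, IsSimpleCycle src tgt c ∧ x = cycleVec c}.Finite :=
    ((finite_setOf_isSimpleCycle src tgt).image cycleVec).subset fun _ ⟨c, hc, hx⟩ =>
      ⟨c, hc, hx.symm⟩
  rw [← closure_convexHull_extremePoints (isCompact_circulationPolytope src tgt)
    (convex_circulationPolytope src tgt), extremePoints_circulationPolytope,
    hfinite.isClosed_convexHull ℝ |>.closure_eq, cyclePolytope]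

end ExtremePoints

section Dimension

variable [Fintype E] [DecidableEq V] {src tgt : E → V}

theorem StronglyConnected.exists_pos_mem_circulationPolytope [Nonempty E]
    (h : StronglyConnected src tgt) :
    ∃ x ∈ circulationPolytope src tgt, ∀ e, 0 < x e := by
  classical
  choose back hback using fun e => h (tgt e) (src e)
  have hmem (e : E) : cycleVec (e :: back e) ∈ circulationPolytope src tgt :=
    (IsWalk.cons e (hback e)).cycleVec_mem_circulationPolytope (List.cons_ne_nil _ _)
  have hcard : 0 < (Fintype.card E : ℝ) := mod_cast Fintype.card_pos
  refine ⟨∑ f, (Fintype.card E : ℝ)⁻¹ • cycleVec (f :: back f),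
    (convex_circulationPolytope src tgt).sum_mem (fun _ _ => by positivity) ?_
      fun f _ => hmem f, fun e => ?_⟩
  · rw [sum_const, card_univ, nsmul_eq_mul, mul_inv_cancel₀ hcard.ne']
  · simp only [Finset.sum_apply, Pi.smul_apply, smul_eq_mul, ← mul_sum]
    refine mul_pos (inv_pos.2 hcard) (sum_pos' (fun f _ => (hmem f).1.1 e) ⟨e, mem_univ e, ?_⟩)
    exact ((hmem e).1.1 e).lt_of_ne' (mt cycleVec_eq_zero_iff.1 (not_not.2 List.mem_cons_self))

theorem sum_edgeBoundary [Fintype V] (src tgt : E → V) (x : E → ℝ) :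
    ∑ v, edgeBoundary src tgt x v = 0 := by
  simp only [edgeBoundary_apply, sum_sub_distrib, sum_fiberwise, sub_self]

/-- The boundary map shifted by the total weight in every coordinate. It imposes conservation at
the vertices and total weight zero by linear equations whose number is exactly the number of
vertices. -/
noncomputable def augmentedBoundary (src tgt : E → V) : (E → ℝ) →ₗ[ℝ] V → ℝ :=
  edgeBoundary src tgt + Fintype.linearCombination ℝ fun _ => 1

theorem augmentedBoundary_apply (src tgt : E → V) (x : E → ℝ) :
    augmentedBoundary src tgt x = edgeBoundary src tgt x + (∑ e, x e) • 1 := by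
  rw [augmentedBoundary, LinearMap.add_apply, Fintype.linearCombination_apply, sum_smul]

theorem augmentedBoundary_eq_zero_iff [Finite V] [Nonempty V] {x : E → ℝ} :
    augmentedBoundary src tgt x = 0 ↔ edgeBoundary src tgt x = 0 ∧ ∑ e, x e = 0 := by
  cases nonempty_fintype V
  rw [augmentedBoundary_apply]
  refine ⟨fun h => ?_, fun ⟨hx, hsum⟩ => by rw [hx, hsum, zero_smul, add_zero]⟩
  have hsum : ∑ e, x e = 0 := by
    have htotal := congrArg (fun y : V → ℝ => ∑ v, y v) h
    simpa [sum_add_distrib, sum_edgeBoundary] using htotal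
  rw [hsum, zero_smul, add_zero] at h
  exact ⟨h, hsum⟩

theorem augmentedBoundary_of_mem {x : E → ℝ} (hx : x ∈ circulationPolytope src tgt) :
    augmentedBoundary src tgt x = 1 := by
  rw [augmentedBoundary_apply, LinearMap.mem_ker.1 hx.2, hx.1.2, one_smul, zero_add]

theorem StronglyConnected.range_augmentedBoundary [Finite V] [Nonempty E]
    (h : StronglyConnected src tgt) : LinearMap.range (augmentedBoundary src tgt) = ⊤ := by
  classical
  cases nonempty_fintype V
  set R := LinearMap.range (augmentedBoundary src tgt)
  have hone : (1 : V → ℝ) ∈ R := by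
    obtain ⟨x, hx, -⟩ := h.exists_pos_mem_circulationPolytope
    exact ⟨x, augmentedBoundary_of_mem hx⟩
  have hsub (u v : V) : (Pi.single u 1 - Pi.single v 1 : V → ℝ) ∈ R := by
    obtain ⟨l, hl⟩ := h u v
    rw [← hl.edgeBoundary_countVec, ← add_sub_cancel_right (edgeBoundary src tgt (countVec l))
      ((∑ e, countVec l e) • 1), ← augmentedBoundary_apply]
    exact R.sub_mem ⟨_, rfl⟩ (R.smul_mem _ hone)
  have hsingle (u : V) : (Pi.single u 1 : V → ℝ) ∈ R := by
    have hcard : (Fintype.card V : ℝ) • (Pi.single u 1 : V → ℝ) =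
        1 + ∑ v, (Pi.single u 1 - Pi.single v 1) := by
      have hsum : ∑ v, (Pi.single v 1 : V → ℝ) = 1 := Finset.univ_sum_single 1
      rw [sum_sub_distrib, sum_const, card_univ, hsum, add_sub_cancel, Nat.cast_smul_eq_nsmul]
    refine (R.smul_mem_iff (s := (Fintype.card V : ℝ)) ?_).1 ?_
    · exact mod_cast (Fintype.card_pos_iff.2 ⟨u⟩).ne'
    · exact hcard ▸ R.add_mem hone (R.sum_mem fun v _ => hsub u v)
  refine R.eq_top_iff'.2 fun y => ?_
  rw [pi_eq_sum_univ' y]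
  exact R.sum_mem fun v _ => R.smul_mem _ (hsingle v)

theorem StronglyConnected.vectorSpan_circulationPolytope [Finite V] [Nonempty E]
    (h : StronglyConnected src tgt) :
    vectorSpan ℝ (circulationPolytope src tgt) = LinearMap.ker (augmentedBoundary src tgt) := by
  have : Nonempty V := Nonempty.map src inferInstance
  refine le_antisymm (Submodule.span_le.2 ?_) fun d hd => ?_
  · rintro _ ⟨x, hx, y, hy, rfl⟩
    simp [augmentedBoundary_of_mem hx, augmentedBoundary_of_mem hy]
  · obtain ⟨hboundary, hsum⟩ := augmentedBoundary_eq_zero_iff.1 hd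
    obtain ⟨x, hx, hpos⟩ := h.exists_pos_mem_circulationPolytope
    obtain ⟨ε, hε, hmem⟩ := exists_add_smul_mem_circulationPolytope hx hboundary hsum
      fun e he => absurd he (hpos e).ne'
    refine (Submodule.smul_mem_iff _ hε.ne').1 ?_
    simpa using vsub_mem_vectorSpan ℝ hmem hx

theorem StronglyConnected.finrank_vectorSpan_circulationPolytope [Fintype V] [Nonempty E]
    (h : StronglyConnected src tgt) :
    Module.finrank ℝ (vectorSpan ℝ (circulationPolytope src tgt)) + Fintype.card V =
      Fintype.card E := by
  have hrank := (augmentedBoundary src tgt).finrank_range_add_finrank_ker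
  rwa [h.range_augmentedBoundary, finrank_top, Module.finrank_pi, Module.finrank_pi, add_comm,
    ← h.vectorSpan_circulationPolytope] at hrank

end Dimension

section WalkLimits

open scoped Topology

variable [DecidableEq E] {src tgt : E → V} {u v : V} {x y : E → ℝ}

/-- The limits of normalized incidence vectors of walks whose lengths tend to infinity. -/
def walkLimits (src tgt : E → V) : Set (E → ℝ) :=
  {x | ∃ l : ℕ → List E, (∀ n, ∃ u v, IsWalk src tgt u v (l n)) ∧
    Tendsto (fun n => (l n).length) atTop atTop ∧
    Tendsto (fun n => cycleVec (l n)) atTop (𝓝 x)}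

theorem walkLimits_subset_circulationPolytope [Fintype E] [DecidableEq V] (src tgt : E → V) :
    walkLimits src tgt ⊆ circulationPolytope src tgt := by
  rintro x ⟨l, hwalk, hlength, hlim⟩
  choose u v hwalk using hwalk
  refine ⟨(isClosed_stdSimplex ℝ E).mem_of_tendsto hlim ?_, ?_⟩
  · filter_upwards [hlength.eventually_gt_atTop 0] with n hn
    exact cycleVec_mem_stdSimplex (List.ne_nil_of_length_pos hn)
  · have hboundary : Tendsto (fun n => edgeBoundary src tgt (cycleVec (l n))) atTop
        (𝓝 (edgeBoundary src tgt x)) :=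
      ((edgeBoundary src tgt).continuous_of_finiteDimensional.tendsto x).comp hlim
    refine tendsto_nhds_unique hboundary (tendsto_pi_nhds.2 fun w => ?_)
    have hinv : Tendsto (fun n => ((l n).length : ℝ)⁻¹) atTop (𝓝 0) :=
      tendsto_inv_atTop_zero.comp (tendsto_natCast_atTop_atTop.comp hlength)
    refine squeeze_zero_norm (fun n => ?_) hinv
    rw [cycleVec_eq_smul, map_smul, (hwalk n).edgeBoundary_countVec, Pi.smul_apply, norm_smul,
      Real.norm_of_nonneg (by positivity)]
    refine mul_le_of_le_one_right (by positivity) ?_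
    rw [Pi.sub_apply, Pi.single_apply, Pi.single_apply]
    split_ifs <;> norm_num

/-- The limits of `countVec (l n) / n` over sequences of closed walks `l n` at `v`. Dividing by `n`
instead of the length, as `cycleVec` does, turns concatenation of walks into addition. -/
def closedWalkRates (src tgt : E → V) (v : V) : AddSubmonoid (E → ℝ) where
  carrier := {x | ∃ l : ℕ → List E, (∀ n, IsWalk src tgt v v (l n)) ∧
    Tendsto (fun n : ℕ => (n : ℝ)⁻¹ • countVec (l n)) atTop (𝓝 x)}
  zero_mem' := ⟨fun _ => [], fun _ => .nil v, by simp [countVec_nil]⟩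
  add_mem' := by
    rintro x y ⟨l, hl, hx⟩ ⟨m, hm, hy⟩
    refine ⟨fun n => l n ++ m n, fun n => (hl n).append (hm n), ?_⟩
    simpa only [countVec_append, smul_add] using hx.add hy

theorem StronglyConnected.smul_countVec_mem_closedWalkRates (h : StronglyConnected src tgt)
    {c : List E} (hc : IsWalk src tgt u u c) {t : ℝ} (ht : 0 ≤ t) (v : V) :
    t • countVec c ∈ closedWalkRates src tgt v := by
  obtain ⟨p, hp⟩ := h v u
  obtain ⟨q, hq⟩ := h u v
  refine ⟨fun n => p ++ ((List.replicate ⌊t * n⌋₊ c).flatten ++ q),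
    fun n => hp.append ((hc.flatten_replicate _).append hq), ?_⟩
  have hinv : Tendsto (fun n : ℕ => (n : ℝ)⁻¹) atTop (𝓝 0) := tendsto_inv_atTop_nhds_zero_nat
  have hfloor : Tendsto (fun n : ℕ => (n : ℝ)⁻¹ * ⌊t * n⌋₊) atTop (𝓝 t) := by
    simpa only [Function.comp_def, div_eq_inv_mul] using
      (tendsto_nat_floor_mul_div_atTop ht).comp tendsto_natCast_atTop_atTop
  have hlim := (hinv.smul_const (countVec p)).add
    ((hfloor.smul_const (countVec c)).add (hinv.smul_const (countVec q)))
  simpa only [countVec_append, countVec_flatten_replicate, smul_add, smul_smul, zero_smul,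
    zero_add, add_zero] using hlim

theorem mem_walkLimits_of_mem_closedWalkRates [Fintype E] (hx : x ∈ closedWalkRates src tgt v)
    (hsum : ∑ e, x e = 1) : x ∈ walkLimits src tgt := by
  obtain ⟨l, hl, hlim⟩ := hx
  have hratio : Tendsto (fun n : ℕ => (n : ℝ)⁻¹ * (l n).length) atTop (𝓝 1) := by
    have := ((continuous_finsetSum univ fun e _ => continuous_apply e).tendsto x).comp hlim
    simpa only [Function.comp_def, Pi.smul_apply, smul_eq_mul, ← mul_sum, sum_countVec, hsum]
      using this
  have hlength : Tendsto (fun n => (l n).length) atTop atTop := by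
    refine tendsto_natCast_atTop_iff.1
      ((hratio.pos_mul_atTop one_pos tendsto_natCast_atTop_atTop).congr' ?_)
    filter_upwards [eventually_ne_atTop 0] with n hn
    field_simp
  refine ⟨l, fun n => ⟨v, v, hl n⟩, hlength, ?_⟩
  have hquot := (hratio.inv₀ one_ne_zero).smul hlim
  rw [inv_one, one_smul] at hquot
  refine hquot.congr' ?_
  filter_upwards [eventually_ne_atTop 0] with n hn
  rw [cycleVec_eq_smul, smul_smul]
  congr 1
  field_simp

theorem StronglyConnected.walkLimits_eq [Fintype E] [DecidableEq V]
    (h : StronglyConnected src tgt) : walkLimits src tgt = circulationPolytope src tgt := by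
  refine (walkLimits_subset_circulationPolytope src tgt).antisymm fun x hx => ?_
  obtain ⟨e, -, -⟩ := exists_ne_zero_of_sum_ne_zero (hx.1.2.trans_ne one_ne_zero)
  refine mem_walkLimits_of_mem_closedWalkRates (v := src e) ?_ hx.1.2
  rw [← cyclePolytope_eq_circulationPolytope, cyclePolytope,
    mem_convexHull_iff_exists_fintype] at hx
  obtain ⟨ι, _, t, z, ht, -, hz, rfl⟩ := hx
  refine sum_mem fun i _ => ?_
  obtain ⟨c, hc, hzc⟩ := hz i
  obtain ⟨u, hwalk⟩ := hc.1.exists_isWalk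
  rw [hzc, cycleVec_eq_smul, smul_smul]
  exact h.smul_countVec_mem_closedWalkRates hwalk (mul_nonneg (ht i) (by positivity)) (src e)

end WalkLimits

section Patterns

variable {j k n : ℕ}

theorem patOf_lt_patOf_iff (f : Fin j → ℕ) (a b : Fin j) :
    patOf f a < patOf f b ↔ toLex (f a, a) < toLex (f b, b) := by
  have hmono : StrictMono fun i => toLex (f (Tuple.sort f i), Tuple.sort f i) :=
    Tuple.eq_sort_iff'.1 rfl
  simpa [patOf] using (hmono.lt_iff_lt (a := patOf f a) (b := patOf f b)).symm

theorem patOf_eq_iff (f : Fin j → ℕ) (π : Equiv.Perm (Fin j)) :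
    patOf f = π ↔ ∀ a b, π a < π b ↔ toLex (f a, a) < toLex (f b, b) := by
  refine ⟨fun h => h ▸ patOf_lt_patOf_iff f, fun h => ?_⟩
  have hmono : StrictMono (patOf f * π⁻¹) := fun a b hab => by
    rw [Equiv.Perm.mul_apply, Equiv.Perm.mul_apply, patOf_lt_patOf_iff, ← h]
    simpa using hab
  exact mul_inv_eq_one.1 ((Equiv.Perm.monotone_iff _).1 hmono.monotone)

theorem toLex_lt_toLex_iff_of_injective {f : Fin j → ℕ} (hf : Function.Injective f) (a b : Fin j) :
    toLex (f a, a) < toLex (f b, b) ↔ f a < f b := by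
  rw [Prod.Lex.toLex_lt_toLex, or_iff_left]
  rintro ⟨hab, hlt⟩
  exact hlt.ne (hf hab)

theorem patOf_eq_iff_of_injective {f : Fin j → ℕ} (hf : Function.Injective f)
    (π : Equiv.Perm (Fin j)) : patOf f = π ↔ ∀ a b, π a < π b ↔ f a < f b := by
  simp only [patOf_eq_iff, toLex_lt_toLex_iff_of_injective hf]

theorem patOf_perm (π : Equiv.Perm (Fin j)) : patOf (fun a => (π a : ℕ)) = π :=
  (patOf_eq_iff_of_injective (Fin.val_injective.comp π.injective) π).2 fun _ _ => Iff.rfl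

theorem patOf_patOf_comp (f : Fin n → ℕ) {g : Fin j → Fin n} (hg : StrictMono g) :
    patOf (fun a => (patOf f (g a) : ℕ)) = patOf (fun a => f (g a)) := by
  have hinj : Function.Injective fun a => (patOf f (g a) : ℕ) :=
    Fin.val_injective.comp ((patOf f).injective.comp hg.injective)
  refine (patOf_eq_iff_of_injective hinj _).2 fun a b => ?_
  simp only [Fin.val_fin_lt, patOf_lt_patOf_iff, Prod.Lex.toLex_lt_toLex, hg.lt_iff_lt]

theorem firstPat_patOf (f : Fin (k + 1) → ℕ) :
    firstPat (patOf f) = patOf fun a => f a.castSucc :=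
  patOf_patOf_comp f Fin.strictMono_castSucc

theorem lastPat_patOf (f : Fin (k + 1) → ℕ) : lastPat (patOf f) = patOf fun a => f a.succ :=
  patOf_patOf_comp f Fin.strictMono_succ

/-- The pattern of the window `f i, …, f (i + j - 1)` of a sequence. As in `patOf`, equal values
are ordered from left to right, so no injectivity of `f` is required. -/
def windowPat (j : ℕ) (f : ℕ → ℕ) (i : ℕ) : Equiv.Perm (Fin j) :=
  patOf fun a : Fin j => f (i + a)

theorem firstPat_windowPat (f : ℕ → ℕ) (i : ℕ) :
    firstPat (windowPat (k + 1) f i) = windowPat k f i :=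
  firstPat_patOf _

theorem lastPat_windowPat (f : ℕ → ℕ) (i : ℕ) :
    lastPat (windowPat (k + 1) f i) = windowPat k f (i + 1) := by
  simp only [windowPat, lastPat_patOf, Fin.val_succ, add_assoc, add_comm 1]

/-- The patterns of the first `m` windows of length `k + 1`: the walk of length `m` in `Ov(k + 1)`
traced by a sequence. -/
def windowPats (k : ℕ) (f : ℕ → ℕ) (m : ℕ) : List (Equiv.Perm (Fin (k + 1))) :=
  (List.range m).map (windowPat (k + 1) f)

theorem length_windowPats (k : ℕ) (f : ℕ → ℕ) (m : ℕ) : (windowPats k f m).length = m := by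
  simp only [windowPats, List.length_map, List.length_range]

theorem isWalk_windowPats (k : ℕ) (f : ℕ → ℕ) (m : ℕ) :
    IsWalk (firstPat (k := k)) lastPat (windowPat k f 0) (windowPat k f m) (windowPats k f m) := by
  induction m with
  | zero => exact .nil _
  | succ m ih =>
    have hedge := IsWalk.singleton firstPat lastPat (windowPat (k + 1) f m)
    rw [firstPat_windowPat, lastPat_windowPat] at hedge
    simpa only [windowPats, List.range_succ, List.map_append, List.map_singleton]
      using ih.append hedge

theorem papp_of_lt (σ : Equiv.Perm (Fin n)) {i : ℕ} (h : i < n) : papp σ i = σ ⟨i, h⟩ :=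
  dif_pos h

theorem injective_papp_window {σ : Equiv.Perm (Fin n)} {i : ℕ} (hi : i + j ≤ n) :
    Function.Injective fun a : Fin j => papp σ (i + a) := by
  intro a b hab
  simpa [papp_of_lt σ (show i + a < n by omega), papp_of_lt σ (show i + b < n by omega),
    Fin.val_inj] using hab

theorem windowPat_papp (σ : Equiv.Perm (Fin n)) : windowPat n (papp σ) 0 = σ := by
  simp only [windowPat, zero_add, papp_of_lt σ (Fin.is_lt _), Fin.eta, patOf_perm]

theorem windowPat_papp_eq_iff {σ : Equiv.Perm (Fin n)} {i : ℕ} (hi : i + j ≤ n)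
    (π : Equiv.Perm (Fin j)) :
    windowPat j (papp σ) i = π ↔ ∀ a b, π a < π b ↔ papp σ (i + a) < papp σ (i + b) :=
  patOf_eq_iff_of_injective (injective_papp_window hi) π

theorem cocc_eq_count_windowPats (π : Equiv.Perm (Fin (k + 1))) (σ : Equiv.Perm (Fin n)) :
    cocc π σ = (windowPats k (papp σ) (n - k)).count π := by
  rw [cocc, ← Nat.count_eq_card_filter_range, Nat.count, windowPats, List.count_eq_countP,
    List.countP_map, Nat.add_sub_add_right]
  refine List.countP_congr fun i hi => ?_
  have hi : i + (k + 1) ≤ n := by have := List.mem_range.1 hi; omega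
  simp only [decide_eq_true_eq, Function.comp_apply, beq_iff_eq, windowPat_papp_eq_iff hi]

theorem stronglyConnected_overlapGraph (k : ℕ) :
    StronglyConnected (firstPat (k := k)) lastPat := by
  intro u v
  let f : ℕ → ℕ := fun i => if i < k then papp u i else papp v (i - k)
  have hu : windowPat k f 0 = u := by
    simpa [windowPat, f] using windowPat_papp u
  have hv : windowPat k f k = v := by
    simpa [windowPat, f] using windowPat_papp v
  exact ⟨_, hu ▸ hv ▸ isWalk_windowPats k f k⟩

/- The new entry is the least value exceeding every old entry that it must exceed; a tie with a
later entry counts as being smaller, so no room has to be made for it. -/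
theorem exists_patOf_cons_eq (e : Equiv.Perm (Fin (k + 1))) {f : Fin k → ℕ}
    (hinj : Function.Injective f) (hf : patOf f = lastPat e) :
    ∃ y, patOf (Fin.cons y f : Fin (k + 1) → ℕ) = e := by
  have hold (a b : Fin k) : e a.succ < e b.succ ↔ f a < f b := by
    have he : Function.Injective fun a : Fin k => (e a.succ : ℕ) :=
      Fin.val_injective.comp (e.injective.comp (Fin.succ_injective k))
    exact ((patOf_eq_iff_of_injective he (lastPat e)).1 rfl a b).symm.trans
      ((patOf_eq_iff_of_injective hinj (lastPat e)).1 hf a b)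
  set y := (univ.filter fun a : Fin k => e a.succ < e 0).sup fun a => f a + 1
  have hbelow (a : Fin k) : e a.succ < e 0 ↔ f a < y := by
    refine ⟨fun ha => Nat.lt_of_succ_le (le_sup (f := fun a => f a + 1) (by simpa using ha)),
      fun ha => ?_⟩
    obtain ⟨b, hb, hab⟩ := Finset.lt_sup_iff.1 ha
    rcases (Nat.lt_succ_iff.1 hab).eq_or_lt with heq | hlt
    · exact hinj heq ▸ (mem_filter.1 hb).2
    · exact ((hold a b).2 hlt).trans (mem_filter.1 hb).2
  have habove (b : Fin k) : e 0 < e b.succ ↔ y ≤ f b := by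
    rw [← not_lt, ← hbelow, not_lt, le_iff_lt_or_eq, or_iff_left]
    exact fun h => b.succ_ne_zero (e.injective h).symm
  refine ⟨y, (patOf_eq_iff _ e).2 fun a b => ?_⟩
  rw [Prod.Lex.toLex_lt_toLex]
  cases a using Fin.cases with
  | zero => cases b using Fin.cases <;> simp [habove, le_iff_lt_or_eq]
  | succ a =>
    cases b using Fin.cases with
    | zero => simp [hbelow]
    | succ b => simp +contextual [hold, hinj.eq_iff]

theorem windowPat_papp_patOf (f : ℕ → ℕ) {i : ℕ} (hi : i + j ≤ n) :
    windowPat j (papp (patOf fun a : Fin n => f a)) i = windowPat j f i := by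
  have hin (a : Fin j) : i + a < n := by omega
  simp only [windowPat, papp_of_lt _ (hin _)]
  exact patOf_patOf_comp (fun a : Fin n => f a) (g := fun a => ⟨i + a, hin a⟩)
    fun a b hab => by simpa using hab

theorem exists_windowPats_eq {u v : Equiv.Perm (Fin k)} {l : List (Equiv.Perm (Fin (k + 1)))}
    (hl : IsWalk (firstPat (k := k)) lastPat u v l) :
    ∃ σ : Equiv.Perm (Fin (l.length + k)),
      windowPat k (papp σ) 0 = u ∧ windowPats k (papp σ) l.length = l := by
  induction hl with
  | nil v =>
    refine ⟨patOf fun a => papp v a, ?_, rfl⟩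
    rw [windowPat_papp_patOf _ (by simp), windowPat_papp]
  | @cons e _ l _ ih =>
    obtain ⟨σ, hstart, hσ⟩ := ih
    obtain ⟨y, hy⟩ := exists_patOf_cons_eq e (injective_papp_window (by omega)) hstart
    let g : ℕ → ℕ := fun i => Nat.casesOn i y (papp σ)
    have hfirst : windowPat (k + 1) g 0 = e := by
      rw [← hy, windowPat]
      congr 1
      funext a
      cases a using Fin.cases <;> simp [g]
    have hrest (i : ℕ) : windowPat (k + 1) g (i + 1) = windowPat (k + 1) (papp σ) i := by
      simp only [windowPat, add_right_comm i 1, g]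
    have hwindows : windowPats k g (l.length + 1) = e :: l := by
      rw [windowPats, List.range_succ_eq_map, List.map_cons, hfirst, List.map_map]
      simpa only [Function.comp_def, Nat.succ_eq_add_one, hrest, windowPats]
        using congrArg (e :: ·) hσ
    refine ⟨patOf fun a => g a, ?_, ?_⟩
    · rw [windowPat_papp_patOf g (by omega), ← firstPat_windowPat, hfirst]
    · refine (List.map_congr_left fun i hi => windowPat_papp_patOf g ?_).trans hwindows
      have := List.mem_range.1 hi
      omega

theorem exists_cocc_eq_count {u v : Equiv.Perm (Fin k)} {l : List (Equiv.Perm (Fin (k + 1)))}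
    (hl : IsWalk (firstPat (k := k)) lastPat u v l) :
    ∃ σ : Equiv.Perm (Fin (l.length + k)), ∀ π, cocc π σ = l.count π := by
  obtain ⟨σ, -, hσ⟩ := exists_windowPats_eq hl
  exact ⟨σ, fun π => by rw [cocc_eq_count_windowPats, Nat.add_sub_cancel, hσ]⟩

end Patterns

section FeasibleRegion

open scoped Topology

theorem tendsto_div_natCast_add_iff {a : ℕ → ℝ} {L : ℕ → ℕ} (hL : Tendsto L atTop atTop)
    (k : ℕ) {x : ℝ} :
    Tendsto (fun m => a m / ((L m + k : ℕ) : ℝ)) atTop (𝓝 x) ↔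
      Tendsto (fun m => a m / (L m : ℝ)) atTop (𝓝 x) := by
  have hlittle : (fun _ : ℕ => (k : ℝ)) =o[atTop] fun m => (L m : ℝ) :=
    Asymptotics.isLittleO_const_left.2 (.inr
      (tendsto_norm_atTop_atTop.comp (tendsto_natCast_atTop_atTop.comp hL)))
  have hequiv := (Asymptotics.IsEquivalent.refl (u := fun m => (L m : ℝ))).add_isLittleO hlittle
  have hdiv := (Asymptotics.IsEquivalent.refl (u := a) (l := atTop)).div hequiv
  simp only [Nat.cast_add]
  exact hdiv.tendsto_nhds_iff

theorem feasibleRegion_subset_walkLimits (k : ℕ) :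
    feasibleRegion (k + 1) ⊆ walkLimits (firstPat (k := k)) lastPat := by
  rintro x ⟨N, σ, hN, hlim⟩
  have hlength : Tendsto (fun m => N m - k) atTop atTop :=
    tendsto_atTop.2 fun b => (hN.eventually_ge_atTop (b + k)).mono fun _ => Nat.le_sub_of_add_le
  refine ⟨fun m => windowPats k (papp (σ m)) (N m - k),
    fun m => ⟨_, _, isWalk_windowPats k _ _⟩, by simpa only [length_windowPats], ?_⟩
  refine tendsto_pi_nhds.2 fun π => ?_
  simp only [cycleVec, length_windowPats, ← cocc_eq_count_windowPats]
  refine (tendsto_div_natCast_add_iff hlength k).1 ((hlim π).congr' ?_)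
  filter_upwards [hN.eventually_ge_atTop k] with m hm
  rw [Nat.sub_add_cancel hm]

theorem walkLimits_subset_feasibleRegion (k : ℕ) :
    walkLimits (firstPat (k := k)) lastPat ⊆ feasibleRegion (k + 1) := by
  rintro x ⟨l, hwalk, hlength, hlim⟩
  choose u v hwalk using hwalk
  choose σ hσ using fun m => exists_cocc_eq_count (hwalk m)
  refine ⟨_, σ, tendsto_atTop_mono (fun m => Nat.le_add_right _ k) hlength, fun π => ?_⟩
  simp only [hσ]
  exact (tendsto_div_natCast_add_iff hlength k).2 (tendsto_pi_nhds.1 hlim π)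

theorem feasibleRegion_eq_circulationPolytope (k : ℕ) :
    feasibleRegion (k + 1) = circulationPolytope (firstPat (k := k)) lastPat :=
  ((feasibleRegion_subset_walkLimits k).antisymm (walkLimits_subset_feasibleRegion k)).trans
    (stronglyConnected_overlapGraph k).walkLimits_eq

end FeasibleRegion

/-- The feasible region `P_{k+1}` for consecutive patterns equals the cycle polytope of the
overlap graph `Ov(k+1)` (whose edges are identified with `S_{k+1}`, the edge `π` going from
`firstPat π` to `lastPat π`); in particular it is a polytope of dimension
`(k+1)! − k!` whose vertices are exactly the normalized incidence vectors of the simple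
cycles of `Ov(k+1)`. -/
theorem feasibleRegion_eq_cyclePolytope (k : ℕ) :
    feasibleRegion (k + 1) = cyclePolytope (firstPat (k := k)) lastPat ∧
    Module.finrank ℝ (vectorSpan ℝ (feasibleRegion (k + 1)))
      = Nat.factorial (k + 1) - Nat.factorial k ∧
    ∀ x : Equiv.Perm (Fin (k + 1)) → ℝ,
      x ∈ Set.extremePoints ℝ (feasibleRegion (k + 1)) ↔
        ∃ c, IsSimpleCycle (firstPat (k := k)) lastPat c ∧ x = cycleVec c := by
  rw [feasibleRegion_eq_circulationPolytope]
  refine ⟨(cyclePolytope_eq_circulationPolytope _ _).symm, ?_, fun x => ?_⟩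
  · have hdim := (stronglyConnected_overlapGraph k).finrank_vectorSpan_circulationPolytope
    rw [Fintype.card_perm, Fintype.card_perm, Fintype.card_fin, Fintype.card_fin] at hdim
    exact Nat.eq_sub_of_add_eq hdim
  · rw [extremePoints_circulationPolytope, Set.mem_ofPred_eq]
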